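/- Let h, l > 0 and let T = {(x,y) ∈ ℝ² : x ≥ 0, y ≥ 0, x/h + y/l ≤ 1} be the right triangle with base [0,h] × {0} and height l. For every function v : ℝ² → ℝ that is continuously differentiable on a neighborhood of T, the weighted trace on the base satisfies ∫₀ʰ v(x,0)²·(1 − x/h) dx ≤ (1/l)·‖v‖²_{L²(T)} + 2·‖v‖_{L²(T)}·‖∂_y v‖_{L²(T)}, where ∂_y v denotes the partial derivative of v in the second coordinate. -/

import Mathlib

open MeasureTheory

/-!
Integrating `∂_y (-(b - y) f) = f - (b - y) ∂_y f` over a vertical segment `[0, b]` turns the trace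
`b f(x, 0)` into an integral over that segment, because the weight `b - y` vanishes at its top end.
Integrating in `x`, with `f = v²`, writes the weighted trace as an integral over the region; there
the weight is at most the height `l`, and Cauchy–Schwarz bounds `∫ |2 v ∂_y v|`.
-/

open Set

section SingleVariable

variable {E : Type*} [NormedAddCommGroup E] [NormedSpace ℝ E] [CompleteSpace E]

theorem integral_sub_smul_deriv_eq_smul_left {f f' : ℝ → E} {a b : ℝ} (hab : a ≤ b)
    (hcont : ContinuousOn f (Icc a b)) (hderiv : ∀ y ∈ Ioo a b, HasDerivAt f (f' y) y)
    (hint : IntegrableOn (fun y ↦ f y - (b - y) • f' y) (Icc a b)) :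
    ∫ y in Icc a b, (f y - (b - y) • f' y) = (b - a) • f a := by
  have hprim : ∀ y ∈ Ioo a b,
      HasDerivAt (fun y ↦ -((b - y) • f y)) (f y - (b - y) • f' y) y := fun y hy ↦ by
    refine (((hasDerivAt_id y).const_sub b).smul (hderiv y hy)).neg.congr_deriv ?_
    simp only [id_eq, neg_smul, one_smul]
    abel
  rw [integral_Icc_eq_integral_Ioc, ← intervalIntegral.integral_of_le hab,
    intervalIntegral.integral_eq_sub_of_hasDerivAt_of_le hab
      ((by fun_prop : Continuous fun y : ℝ ↦ b - y).continuousOn.smul hcont).neg hprim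
      ((intervalIntegrable_iff_integrableOn_Icc_of_le hab).2 hint)]
  simp

end SingleVariable

section L2

variable {α E : Type*} [MeasurableSpace α] {μ : Measure α} [NormedAddCommGroup E]

theorem integral_norm_mul_norm_le_sqrt_mul_sqrt {f g : α → E} (hf : MemLp f 2 μ)
    (hg : MemLp g 2 μ) :
    ∫ x, ‖f x‖ * ‖g x‖ ∂μ ≤ √(∫ x, ‖f x‖ ^ 2 ∂μ) * √(∫ x, ‖g x‖ ^ 2 ∂μ) := by
  rw [← ENNReal.ofReal_ofNat 2] at hf hg
  simpa [Real.sqrt_eq_rpow] using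
    integral_mul_norm_le_Lp_mul_Lq Real.HolderConjugate.two_two hf hg

theorem memLp_restrict_of_continuousOn_of_isCompact [TopologicalSpace α] [OpensMeasurableSpace α]
    [SecondCountableTopologyEither α E] [IsFiniteMeasureOnCompacts μ] {K : Set α} {f : α → E}
    (hf : ContinuousOn f K) (hK : IsCompact K) (hKm : MeasurableSet K) (p : ENNReal) :
    MemLp f p (μ.restrict K) := by
  have : IsFiniteMeasure (μ.restrict K) := isFiniteMeasure_restrict.2 hK.measure_lt_top.ne
  obtain ⟨C, hC⟩ := hK.exists_bound_of_continuousOn hf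
  exact .of_bound (hf.aestronglyMeasurable_of_isCompact hK hKm) C
    ((ae_restrict_iff' hKm).2 (.of_forall hC))

end L2

section Slices

variable {α β E : Type*} [MeasurableSpace α] [MeasurableSpace β] {μ : Measure α} {ν : Measure β}
  [SFinite μ] [SFinite ν] [NormedAddCommGroup E] {T : Set (α × β)} {F : α × β → E}

theorem ae_integrableOn_slice (hT : MeasurableSet T) (hF : IntegrableOn F T (μ.prod ν)) :
    ∀ᵐ x ∂μ, IntegrableOn (fun y ↦ F (x, y)) (Prod.mk x ⁻¹' T) ν := by
  filter_upwards [(hF.integrable_indicator hT).prod_right_ae] with x hx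
  exact (integrable_indicator_iff (measurable_prodMk_left hT)).1 hx

theorem setIntegral_eq_integral_setIntegral_slice [NormedSpace ℝ E] (hT : MeasurableSet T)
    (hF : IntegrableOn F T (μ.prod ν)) :
    ∫ p in T, F p ∂μ.prod ν = ∫ x, ∫ y in Prod.mk x ⁻¹' T, F (x, y) ∂ν ∂μ := by
  rw [← integral_indicator hT, integral_prod _ (hF.integrable_indicator hT)]
  congr 1 with x
  exact integral_indicator (measurable_prodMk_left hT)

end Slices

/-- The closed region `{(x, y) : x ∈ s, 0 ≤ y ≤ ψ x}` between the base `s` and the graph of `ψ`.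
Mathlib's `regionBetween` is its counterpart without the base and the graph; the triangle of the
theorem contains both. -/
def closedRegionUnder {α : Type*} (s : Set α) (ψ : α → ℝ) : Set (α × ℝ) :=
  {p | p.1 ∈ s ∧ p.2 ∈ Icc 0 (ψ p.1)}

section ClosedRegionUnder

variable {α : Type*} {s : Set α} {ψ : α → ℝ}

theorem mk_preimage_closedRegionUnder {x : α} (hx : x ∈ s) :
    Prod.mk x ⁻¹' closedRegionUnder s ψ = Icc 0 (ψ x) := by
  ext y
  simp [closedRegionUnder, hx]

theorem mk_preimage_closedRegionUnder_eq_empty {x : α} (hx : x ∉ s) :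
    Prod.mk x ⁻¹' closedRegionUnder s ψ = ∅ := by
  ext y
  simp [closedRegionUnder, hx]

theorem measurableSet_closedRegionUnder [MeasurableSpace α] (hs : MeasurableSet s)
    (hψ : Measurable ψ) : MeasurableSet (closedRegionUnder s ψ) :=
  measurableSet_region_between_cc measurable_const hψ hs

theorem setIntegral_closedRegionUnder [MeasurableSpace α] {μ : Measure α} [SFinite μ] {E : Type*}
    [NormedAddCommGroup E] [NormedSpace ℝ E] {F : α × ℝ → E} (hs : MeasurableSet s)
    (hψ : Measurable ψ) (hF : IntegrableOn F (closedRegionUnder s ψ) (μ.prod volume)) :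
    ∫ p in closedRegionUnder s ψ, F p ∂μ.prod volume =
      ∫ x in s, ∫ y in Icc 0 (ψ x), F (x, y) ∂volume ∂μ :=
  calc ∫ p in closedRegionUnder s ψ, F p ∂μ.prod volume
      = ∫ x, ∫ y in Prod.mk x ⁻¹' closedRegionUnder s ψ, F (x, y) ∂volume ∂μ :=
        setIntegral_eq_integral_setIntegral_slice (measurableSet_closedRegionUnder hs hψ) hF
    _ = ∫ x in s, ∫ y in Prod.mk x ⁻¹' closedRegionUnder s ψ, F (x, y) ∂volume ∂μ :=
        (setIntegral_eq_integral_of_forall_compl_eq_zero fun x hx ↦ by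
          rw [mk_preimage_closedRegionUnder_eq_empty hx, setIntegral_empty]).symm
    _ = ∫ x in s, ∫ y in Icc 0 (ψ x), F (x, y) ∂volume ∂μ :=
        setIntegral_congr_fun hs fun x hx ↦ by rw [mk_preimage_closedRegionUnder hx]

theorem isCompact_closedRegionUnder [TopologicalSpace α] (hs : IsCompact s) (hψ : Continuous ψ) :
    IsCompact (closedRegionUnder s ψ) := by
  obtain ⟨M, hM⟩ := hs.bddAbove_image hψ.continuousOn
  have hclosed : IsClosed {p : α × ℝ | p.2 ≤ ψ p.1} := isClosed_le (by fun_prop) (by fun_prop)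
  convert (hs.prod (isCompact_Icc (a := 0) (b := M))).inter_right hclosed using 1
  ext ⟨x, y⟩
  simp only [closedRegionUnder, mem_ofPred_eq, mem_Icc, mem_inter_iff, mem_prod]
  constructor
  · rintro ⟨hx, hy, hyψ⟩
    exact ⟨⟨hx, hy, hyψ.trans (hM (mem_image_of_mem ψ hx))⟩, hyψ⟩
  · rintro ⟨⟨hx, hy, -⟩, hyψ⟩
    exact ⟨hx, hy, hyψ⟩

theorem triangle_eq_closedRegionUnder {h l : ℝ} (hh : 0 < h) (hl : 0 < l) :
    {p : ℝ × ℝ | 0 ≤ p.1 ∧ 0 ≤ p.2 ∧ p.1 / h + p.2 / l ≤ 1} =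
      closedRegionUnder (Icc 0 h) (fun x ↦ l * (1 - x / h)) := by
  ext ⟨x, y⟩
  have hypotenuse : x / h + y / l ≤ 1 ↔ y ≤ l * (1 - x / h) := by
    rw [← le_sub_iff_add_le', div_le_iff₀ hl, mul_comm]
  simp only [closedRegionUnder, mem_ofPred_eq, mem_Icc, hypotenuse]
  constructor
  · rintro ⟨hx, hy, hxy⟩
    have : 0 ≤ 1 - x / h := nonneg_of_mul_nonneg_right (hy.trans hxy) hl
    exact ⟨⟨hx, (div_le_one hh).1 (sub_nonneg.1 this)⟩, hy, hxy⟩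
  · rintro ⟨⟨hx, -⟩, hy, hxy⟩
    exact ⟨hx, hy, hxy⟩

end ClosedRegionUnder

section Trace

variable {α : Type*} [MeasurableSpace α] {μ : Measure α} [SFinite μ] {s : Set α} {ψ : α → ℝ}

theorem setIntegral_smul_trace_eq {E : Type*} [NormedAddCommGroup E] [NormedSpace ℝ E]
    [CompleteSpace E] {f f' : α × ℝ → E} (hs : MeasurableSet s) (hψ : Measurable ψ)
    (hψ0 : ∀ x ∈ s, 0 ≤ ψ x)
    (hcont : ∀ x ∈ s, ContinuousOn (fun y ↦ f (x, y)) (Icc 0 (ψ x)))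
    (hderiv : ∀ x ∈ s, ∀ y ∈ Ioo 0 (ψ x), HasDerivAt (fun y ↦ f (x, y)) (f' (x, y)) y)
    (hint : IntegrableOn (fun p ↦ f p - (ψ p.1 - p.2) • f' p) (closedRegionUnder s ψ)
      (μ.prod volume)) :
    ∫ x in s, ψ x • f (x, 0) ∂μ =
      ∫ p in closedRegionUnder s ψ, (f p - (ψ p.1 - p.2) • f' p) ∂μ.prod volume := by
  rw [setIntegral_closedRegionUnder hs hψ hint]
  refine setIntegral_congr_ae hs ?_
  filter_upwards [ae_integrableOn_slice (measurableSet_closedRegionUnder hs hψ) hint]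
    with x hslice hx
  rw [mk_preimage_closedRegionUnder hx] at hslice
  simpa using (integral_sub_smul_deriv_eq_smul_left (hψ0 x hx) (hcont x hx) (hderiv x hx)
    hslice).symm

theorem setIntegral_mul_trace_le {f f' : α × ℝ → ℝ} {M : ℝ} (hs : MeasurableSet s)
    (hψ : Measurable ψ) (hψ0 : ∀ x ∈ s, 0 ≤ ψ x) (hψM : ∀ x ∈ s, ψ x ≤ M)
    (hcont : ∀ x ∈ s, ContinuousOn (fun y ↦ f (x, y)) (Icc 0 (ψ x)))
    (hderiv : ∀ x ∈ s, ∀ y ∈ Ioo 0 (ψ x), HasDerivAt (fun y ↦ f (x, y)) (f' (x, y)) y)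
    (hf : IntegrableOn f (closedRegionUnder s ψ) (μ.prod volume))
    (hf' : IntegrableOn f' (closedRegionUnder s ψ) (μ.prod volume)) :
    ∫ x in s, ψ x * f (x, 0) ∂μ ≤
      ∫ p in closedRegionUnder s ψ, f p ∂μ.prod volume +
        M * ∫ p in closedRegionUnder s ψ, ‖f' p‖ ∂μ.prod volume := by
  have hT := measurableSet_closedRegionUnder hs hψ
  have hweight : ∀ p ∈ closedRegionUnder s ψ, ‖ψ p.1 - p.2‖ ≤ M := fun p ⟨hx, hy, hyψ⟩ ↦ by
    rw [Real.norm_of_nonneg (sub_nonneg.2 hyψ)]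
    linarith [hψM p.1 hx]
  have hweighted : IntegrableOn (fun p ↦ (ψ p.1 - p.2) * f' p) (closedRegionUnder s ψ)
      (μ.prod volume) :=
    hf'.bdd_mul (by fun_prop) ((ae_restrict_iff' hT).2 (.of_forall hweight))
  have hbound : ∀ p ∈ closedRegionUnder s ψ,
      f p - (ψ p.1 - p.2) * f' p ≤ f p + M * ‖f' p‖ := fun p hp ↦ by
    rw [sub_eq_add_neg]
    gcongr
    calc -((ψ p.1 - p.2) * f' p) ≤ ‖ψ p.1 - p.2‖ * ‖f' p‖ := by
          rw [← norm_mul]; exact neg_le_abs _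
      _ ≤ M * ‖f' p‖ := by gcongr; exact hweight p hp
  calc ∫ x in s, ψ x * f (x, 0) ∂μ
      = ∫ p in closedRegionUnder s ψ, (f p - (ψ p.1 - p.2) * f' p) ∂μ.prod volume :=
        setIntegral_smul_trace_eq hs hψ hψ0 hcont hderiv (hf.sub hweighted)
    _ ≤ ∫ p in closedRegionUnder s ψ, (f p + M * ‖f' p‖) ∂μ.prod volume :=
        setIntegral_mono_on (hf.sub hweighted) (hf.add (hf'.norm.const_mul M)) hT hbound
    _ = _ := by rw [integral_add hf (hf'.norm.const_mul M), integral_const_mul]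

theorem stmt_2_general {φ : α → ℝ} {l : ℝ} {v v' : α × ℝ → ℝ} (hs : MeasurableSet s)
    (hφ : Measurable φ) (hφ0 : ∀ x ∈ s, 0 ≤ φ x) (hφ1 : ∀ x ∈ s, φ x ≤ 1) (hl : 0 < l)
    (hcont : ∀ x ∈ s, ContinuousOn (fun y ↦ v (x, y)) (Icc 0 (l * φ x)))
    (hderiv : ∀ x ∈ s, ∀ y ∈ Ioo 0 (l * φ x), HasDerivAt (fun y ↦ v (x, y)) (v' (x, y)) y)
    (hv : MemLp v 2 ((μ.prod volume).restrict (closedRegionUnder s fun x ↦ l * φ x)))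
    (hv' : MemLp v' 2 ((μ.prod volume).restrict (closedRegionUnder s fun x ↦ l * φ x))) :
    ∫ x in s, v (x, 0) ^ 2 * φ x ∂μ ≤
      1 / l * ∫ p in closedRegionUnder s (fun x ↦ l * φ x), v p ^ 2 ∂μ.prod volume +
        2 * √(∫ p in closedRegionUnder s (fun x ↦ l * φ x), v p ^ 2 ∂μ.prod volume) *
          √(∫ p in closedRegionUnder s (fun x ↦ l * φ x), v' p ^ 2 ∂μ.prod volume) := by
  set T := closedRegionUnder s fun x ↦ l * φ x
  have htrace : ∫ x in s, l * φ x * v (x, 0) ^ 2 ∂μ ≤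
      ∫ p in T, v p ^ 2 ∂μ.prod volume + l * ∫ p in T, ‖2 * (v p * v' p)‖ ∂μ.prod volume :=
    setIntegral_mul_trace_le hs (hφ.const_mul l) (fun x hx ↦ mul_nonneg hl.le (hφ0 x hx))
      (fun x hx ↦ mul_le_of_le_one_right hl.le (hφ1 x hx)) (fun x hx ↦ (hcont x hx).pow 2)
      (fun x hx y hy ↦ ((hderiv x hx y hy).fun_pow 2).congr_deriv (by simp [mul_assoc]))
      hv.integrable_sq ((hv.integrable_mul hv').const_mul 2)
  have hcauchy : ∫ p in T, ‖2 * (v p * v' p)‖ ∂μ.prod volume ≤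
      2 * (√(∫ p in T, v p ^ 2 ∂μ.prod volume) * √(∫ p in T, v' p ^ 2 ∂μ.prod volume)) := by
    simpa [integral_const_mul] using integral_norm_mul_norm_le_sqrt_mul_sqrt hv hv'
  have hfactor : ∫ x in s, l * φ x * v (x, 0) ^ 2 ∂μ = l * ∫ x in s, v (x, 0) ^ 2 * φ x ∂μ := by
    rw [← integral_const_mul]
    congr 1 with x
    ring
  refine le_of_mul_le_mul_left ?_ hl
  calc l * ∫ x in s, v (x, 0) ^ 2 * φ x ∂μ
      ≤ ∫ p in T, v p ^ 2 ∂μ.prod volume + l * (2 * (√(∫ p in T, v p ^ 2 ∂μ.prod volume) *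
          √(∫ p in T, v' p ^ 2 ∂μ.prod volume))) := by
        rw [← hfactor]
        exact htrace.trans (by gcongr)
    _ = _ := by field_simp

end Trace

theorem hasDerivAt_slice_of_differentiableAt {E F : Type*} [NormedAddCommGroup E]
    [NormedSpace ℝ E] [NormedAddCommGroup F] [NormedSpace ℝ F] {v : E × ℝ → F} {x : E} {y : ℝ}
    (hv : DifferentiableAt ℝ v (x, y)) :
    HasDerivAt (fun y ↦ v (x, y)) (fderiv ℝ v (x, y) (0, 1)) y :=
  hv.hasFDerivAt.comp_hasDerivAt y ((hasDerivAt_const y x).prodMk (hasDerivAt_id y))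

/-- Weighted trace inequality on the base of the right triangle
`T = {(x,y) : x ≥ 0, y ≥ 0, x/h + y/l ≤ 1}`:
`∫₀ʰ v(x,0)²(1 − x/h) dx ≤ (1/l)‖v‖²_{L²(T)} + 2‖v‖_{L²(T)}‖∂_y v‖_{L²(T)}`. -/
theorem stmt_2 (h l : ℝ) (hh : 0 < h) (hl : 0 < l)
    (v : ℝ × ℝ → ℝ)
    (hv : ∃ U : Set (ℝ × ℝ), IsOpen U ∧
      {p : ℝ × ℝ | 0 ≤ p.1 ∧ 0 ≤ p.2 ∧ p.1 / h + p.2 / l ≤ 1} ⊆ U ∧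
      ContDiffOn ℝ 1 v U) :
    (∫ x in Set.Icc 0 h, (v (x, 0)) ^ 2 * (1 - x / h)) ≤
      (1 / l) * (∫ p in {p : ℝ × ℝ | 0 ≤ p.1 ∧ 0 ≤ p.2 ∧ p.1 / h + p.2 / l ≤ 1}, (v p) ^ 2) +
        2 * Real.sqrt (∫ p in {p : ℝ × ℝ | 0 ≤ p.1 ∧ 0 ≤ p.2 ∧ p.1 / h + p.2 / l ≤ 1}, (v p) ^ 2) *
          Real.sqrt (∫ p in {p : ℝ × ℝ | 0 ≤ p.1 ∧ 0 ≤ p.2 ∧ p.1 / h + p.2 / l ≤ 1},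
            (fderiv ℝ v p (0, 1)) ^ 2) := by
  obtain ⟨U, hU, hTU, hv⟩ := hv
  rw [triangle_eq_closedRegionUnder hh hl] at hTU ⊢
  have hT : IsCompact (closedRegionUnder (Icc 0 h) fun x ↦ l * (1 - x / h)) :=
    isCompact_closedRegionUnder isCompact_Icc (by fun_prop)
  have hslice {x y : ℝ} (hx : x ∈ Icc 0 h) (hy : y ∈ Icc 0 (l * (1 - x / h))) :
      HasDerivAt (fun y ↦ v (x, y)) (fderiv ℝ v (x, y) (0, 1)) y :=
    hasDerivAt_slice_of_differentiableAt
      ((hv.differentiableOn one_ne_zero).differentiableAt (hU.mem_nhds (hTU ⟨hx, hy⟩)))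
  have hpartial : ContinuousOn (fun p ↦ fderiv ℝ v p (0, 1)) U :=
    (hv.continuousOn_fderiv_of_isOpen hU le_rfl).clm_apply continuousOn_const
  exact stmt_2_general measurableSet_Icc (by fun_prop)
    (fun x hx ↦ sub_nonneg.2 ((div_le_one hh).2 hx.2))
    (fun x hx ↦ sub_le_self 1 (div_nonneg hx.1 hh.le)) hl
    (fun x hx y hy ↦ (hslice hx hy).continuousAt.continuousWithinAt)
    (fun x hx y hy ↦ hslice hx (Ioo_subset_Icc_self hy))
    (memLp_restrict_of_continuousOn_of_isCompact (hv.continuousOn.mono hTU) hT hT.measurableSet 2)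
    (memLp_restrict_of_continuousOn_of_isCompact (hpartial.mono hTU) hT hT.measurableSet 2)
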